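/- Let f(x) = Σ_{j=1}^{L_f} ω_j^f · φ(x; μ_j^f, α_j^f, β_j^f) and g(x) = Σ_{k=1}^{L_g} ω_k^g · φ(x; μ_k^g, α_k^g, β_k^g) be finite mixtures of generalized normal densities with all weights strictly positive and all scales and shapes strictly positive. If min_j β_j^f < min_k β_k^g, then f(x)/g(x) → +∞ as x → +∞ and f(x)/g(x) → +∞ as x → −∞. -/

import Mathlib

open Filter

/-- The generalized normal density with location `μ`, scale `α`, and shape `β`. -/
noncomputable def gnpdf (μ α β x : ℝ) : ℝ :=
  β / (2 * α * Real.Gamma (1 / β)) * Real.exp (-((|x - μ| / α) ^ β))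

theorem aux_exponent (l : Filter ℝ) (hl : Tendsto (fun x : ℝ => |x|) l atTop)
    (m a b m' a' b' : ℝ) (ha : 0 < a) (hb : 0 < b) (ha' : 0 < a') (hbb : b < b') :
    Tendsto (fun x => (|x - m'| / a') ^ b' - (|x - m| / a) ^ b) l atTop := by
  have hd : Tendsto (fun x : ℝ => |x - m'|) l atTop := by
    refine tendsto_atTop_mono (fun x => ?_) (tendsto_atTop_add_const_right l (-|m'|) hl)
    have := abs_sub_abs_le_abs_sub x m'
    linarith
  have hv : Tendsto (fun x : ℝ => |x - m'| / a') l atTop := hd.atTop_div_const ha'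
  have h1 := (tendsto_rpow_atTop hb).comp hv
  have h2 := tendsto_atTop_add_const_right l (-(2 * a' / a) ^ b)
    ((tendsto_rpow_atTop (sub_pos.2 hbb)).comp hv)
  refine tendsto_atTop_mono' l ?_ (h1.atTop_mul_atTop₀ h2)
  filter_upwards [hd.eventually_ge_atTop |m' - m|, hv.eventually_gt_atTop 0] with x hx hx0
  have hle : |x - m| / a ≤ (2 * a' / a) * (|x - m'| / a') := by
    have h3 : |x - m| ≤ 2 * |x - m'| := by
      have := abs_sub_le x m' m
      linarith
    have : (2 * a' / a) * (|x - m'| / a') = 2 * |x - m'| / a := by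
      field_simp
    rw [this]
    gcongr
  have hp : (|x - m| / a) ^ b ≤ (2 * a' / a) ^ b * (|x - m'| / a') ^ b := by
    rw [← Real.mul_rpow (by positivity) hx0.le]
    exact Real.rpow_le_rpow (by positivity) hle hb.le
  have he : (|x - m'| / a') ^ b' = (|x - m'| / a') ^ b * (|x - m'| / a') ^ (b' - b) := by
    rw [← Real.rpow_add hx0]
    congr 1
    ring
  simp only [Function.comp]
  rw [he]
  linarith

theorem aux_gnpdf_pos (m a b x : ℝ) (ha : 0 < a) (hb : 0 < b) : 0 < gnpdf m a b x := by
  have := Real.Gamma_pos_of_pos (one_div_pos.2 hb)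
  unfold gnpdf
  positivity

theorem aux_ratio (l : Filter ℝ) (hl : Tendsto (fun x : ℝ => |x|) l atTop)
    (m a b m' a' b' : ℝ) (ha : 0 < a) (hb : 0 < b) (ha' : 0 < a') (hbb : b < b') :
    Tendsto (fun x => gnpdf m' a' b' x / gnpdf m a b x) l (nhds 0) := by
  have h := (Real.tendsto_exp_neg_atTop_nhds_zero.comp
    (aux_exponent l hl m a b m' a' b' ha hb ha' hbb)).const_mul
    ((b' / (2 * a' * Real.Gamma (1 / b'))) / (b / (2 * a * Real.Gamma (1 / b))))
  rw [mul_zero] at h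
  refine h.congr (fun x => ?_)
  simp only [Function.comp, gnpdf]
  rw [mul_div_mul_comm, ← Real.exp_sub]
  congr 2
  ring

theorem aux_main (l : Filter ℝ) (hl : Tendsto (fun x : ℝ => |x|) l atTop)
    (Lf Lg : ℕ)
    (ωf μf αf βf : Fin (Lf + 1) → ℝ) (ωg μg αg βg : Fin (Lg + 1) → ℝ)
    (hωf : ∀ j, 0 < ωf j) (hαf : ∀ j, 0 < αf j) (hβf : ∀ j, 0 < βf j)
    (hωg : ∀ k, 0 < ωg k) (hαg : ∀ k, 0 < αg k) (hβg : ∀ k, 0 < βg k)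
    (hmin : Finset.univ.inf' Finset.univ_nonempty βf
          < Finset.univ.inf' Finset.univ_nonempty βg) :
    Tendsto (fun x => (∑ j, ωf j * gnpdf (μf j) (αf j) (βf j) x)
                    / (∑ k, ωg k * gnpdf (μg k) (αg k) (βg k) x)) l atTop := by
  obtain ⟨i, -, hi⟩ := Finset.exists_mem_eq_inf' Finset.univ_nonempty βf
  have hlt : ∀ k, βf i < βg k := fun k => by
    rw [← hi]
    exact hmin.trans_le (Finset.inf'_le _ (Finset.mem_univ k))
  have hfp : ∀ j x, 0 < ωf j * gnpdf (μf j) (αf j) (βf j) x := fun j x =>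
    mul_pos (hωf j) (aux_gnpdf_pos _ _ _ _ (hαf j) (hβf j))
  have hgp : ∀ k x, 0 < ωg k * gnpdf (μg k) (αg k) (βg k) x := fun k x =>
    mul_pos (hωg k) (aux_gnpdf_pos _ _ _ _ (hαg k) (hβg k))
  have hF : ∀ x, 0 < ∑ j, ωf j * gnpdf (μf j) (αf j) (βf j) x := fun x =>
    Finset.sum_pos (fun j _ => hfp j x) Finset.univ_nonempty
  have hG : ∀ x, 0 < ∑ k, ωg k * gnpdf (μg k) (αg k) (βg k) x := fun x =>
    Finset.sum_pos (fun k _ => hgp k x) Finset.univ_nonempty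
  have h0 : Tendsto (fun x => ∑ k, (ωg k / ωf i) *
      (gnpdf (μg k) (αg k) (βg k) x / gnpdf (μf i) (αf i) (βf i) x)) l (nhds 0) := by
    have := tendsto_finsetSum (Finset.univ : Finset (Fin (Lg + 1))) (fun k _ =>
      (aux_ratio l hl (μf i) (αf i) (βf i) (μg k) (αg k) (βg k) (hαf i) (hβf i) (hαg k)
        (hlt k)).const_mul (ωg k / ωf i))
    simpa using this
  have h1 : Tendsto (fun x => (∑ k, ωg k * gnpdf (μg k) (αg k) (βg k) x)
      / (∑ j, ωf j * gnpdf (μf j) (αf j) (βf j) x)) l (nhds 0) := by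
    refine squeeze_zero (fun x => (div_pos (hG x) (hF x)).le) (fun x => ?_) h0
    have hs : ωf i * gnpdf (μf i) (αf i) (βf i) x
        ≤ ∑ j, ωf j * gnpdf (μf j) (αf j) (βf j) x :=
      Finset.single_le_sum (f := fun j => ωf j * gnpdf (μf j) (αf j) (βf j) x)
        (fun j _ => (hfp j x).le) (Finset.mem_univ i)
    refine (div_le_div_of_nonneg_left (hG x).le (hfp i x) hs).trans (le_of_eq ?_)
    rw [Finset.sum_div]
    exact Finset.sum_congr rfl (fun k _ => mul_div_mul_comm _ _ _ _)
  have h2 := (tendsto_nhdsWithin_iff.2 ⟨h1, Eventually.of_forall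
    (fun x => div_pos (hG x) (hF x))⟩).inv_tendsto_nhdsGT_zero
  refine h2.congr (fun x => ?_)
  simp only [Pi.inv_apply, inv_div]

/-- For finite mixtures `f` and `g` of generalized normal densities with
strictly positive weights, scales and shapes (weights summing to 1), if the minimal
shape parameter of `f` is strictly smaller than that of `g`, then `f/g → +∞` in both
tails. -/
theorem mixture_ratio_tendsto_atTop_of_min_shape_lt
    (Lf Lg : ℕ)
    (ωf μf αf βf : Fin (Lf + 1) → ℝ) (ωg μg αg βg : Fin (Lg + 1) → ℝ)
    (hωf : ∀ j, 0 < ωf j) (hαf : ∀ j, 0 < αf j) (hβf : ∀ j, 0 < βf j)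
    (hωg : ∀ k, 0 < ωg k) (hαg : ∀ k, 0 < αg k) (hβg : ∀ k, 0 < βg k)
    (hsumf : ∑ j, ωf j = 1) (hsumg : ∑ k, ωg k = 1)
    (hmin : Finset.univ.inf' Finset.univ_nonempty βf
          < Finset.univ.inf' Finset.univ_nonempty βg) :
    Tendsto (fun x => (∑ j, ωf j * gnpdf (μf j) (αf j) (βf j) x)
                    / (∑ k, ωg k * gnpdf (μg k) (αg k) (βg k) x)) atTop atTop ∧
    Tendsto (fun x => (∑ j, ωf j * gnpdf (μf j) (αf j) (βf j) x)
                    / (∑ k, ωg k * gnpdf (μg k) (αg k) (βg k) x)) atBot atTop := by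
  exact ⟨aux_main atTop tendsto_abs_atTop_atTop Lf Lg ωf μf αf βf ωg μg αg βg
      hωf hαf hβf hωg hαg hβg hmin,
    aux_main atBot tendsto_abs_atBot_atTop Lf Lg ωf μf αf βf ωg μg αg βg
      hωf hαf hβf hωg hαg hβg hmin⟩
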